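/- Let p ∈ (1,2). There does not exist a constant μ ∈ (0,∞) such that for every integer h ≥ 1 and every λ ≥ 1, if T^ω_h is λ-finitely representable in ℓ_p, then c_{ℓ_p}(T^ω_h) ≤ μ·λ. -/

import Mathlib

open Set Function Filter

open scoped ENNReal

attribute [local instance] Classical.propDecidable

noncomputable section

def LipUB {α β : Type*} (dα : α → α → ℝ) (dβ : β → β → ℝ) (f : α → β) (L : ℝ) : Prop :=
  ∀ a b : α, dβ (f a) (f b) ≤ L * dα a b

def CoLipUB {α β : Type*} (dα : α → α → ℝ) (dβ : β → β → ℝ) (f : α → β) (C : ℝ) : Prop :=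
  ∀ a b : α, dα a b ≤ C * dβ (f a) (f b)

def IsBiLipEmb {α β : Type*} (dα : α → α → ℝ) (dβ : β → β → ℝ) (f : α → β) : Prop :=
  Function.Injective f ∧ ∃ L C : ℝ, LipUB dα dβ f L ∧ CoLipUB dα dβ f C

def distortionSet (α β : Type*) (dα : α → α → ℝ) (dβ : β → β → ℝ) : Set ℝ :=
  {D | ∃ f : α → β, Function.Injective f ∧ ∃ L C : ℝ,
    LipUB dα dβ f L ∧ CoLipUB dα dβ f C ∧ D = L * C}

def cDist (α β : Type*) (dα : α → α → ℝ) (dβ : β → β → ℝ) : ℝ≥0∞ :=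
  ⨅ D ∈ distortionSet α β dα dβ, ENNReal.ofReal D
def lcpLen : List ℕ → List ℕ → ℕ
  | a :: x, b :: y => if a = b then lcpLen x y + 1 else 0
  | _, _ => 0

def treeDist (x y : List ℕ) : ℝ :=
  (x.length : ℝ) + (y.length : ℝ) - 2 * (lcpLen x y : ℝ)

def TreeOmega (h : ℕ) : Type := {x : List ℕ // x.length ≤ h}

def tDist (h : ℕ) : TreeOmega h → TreeOmega h → ℝ := fun x y => treeDist x.1 y.1

theorem tree_decomp (x y : List ℕ) : ∃ z x1 y1, x = z ++ x1 ∧ y = z ++ y1 ∧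
    lcpLen x y = z.length ∧ treeDist x y = x1.length + y1.length := by
  induction x generalizing y with
  | nil => exact ⟨[], [], y, by simp [lcpLen, treeDist]⟩
  | cons a x ih =>
    cases y with
    | nil => exact ⟨[], a :: x, [], by simp [lcpLen, treeDist]⟩
    | cons b y =>
      by_cases hab : a = b
      · subst hab
        obtain ⟨z, x1, y1, h1, h2, h3, h4⟩ := ih y
        refine ⟨a :: z, x1, y1, by simp [h1], by simp [h2], by simp [lcpLen, h3], ?_⟩
        rw [← h4]
        simp only [treeDist, lcpLen, if_true, List.length_cons]
        push_cast
        ring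
      · exact ⟨[], a :: x, b :: y, by simp [lcpLen, treeDist, hab]⟩

theorem treeDist_symm (x y : List ℕ) : treeDist x y = treeDist y x := by
  have : ∀ x y : List ℕ, lcpLen x y = lcpLen y x := by
    intro x
    induction x with
    | nil => intro y; cases y <;> simp [lcpLen]
    | cons a x ih =>
      intro y
      cases y with
      | nil => simp [lcpLen]
      | cons b y =>
        by_cases hab : a = b
        · subst hab
          simp [lcpLen, ih y]
        · simp [lcpLen, hab, Ne.symm hab]
  simp only [treeDist, this x y]
  ring

theorem eq_of_treeDist_le (x y : List ℕ) (h : treeDist x y ≤ 0) : x = y := by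
  obtain ⟨z, x1, y1, h1, h2, -, h4⟩ := tree_decomp x y
  rw [h4] at h
  have h5 : x1.length + y1.length ≤ 0 := by exact_mod_cast h
  have hx : x1 = [] := List.eq_nil_of_length_eq_zero (by omega)
  have hy : y1 = [] := List.eq_nil_of_length_eq_zero (by omega)
  rw [h1, h2, hx, hy]

theorem treeDist_nonneg (x y : List ℕ) : 0 ≤ treeDist x y := by
  obtain ⟨z, x1, y1, h1, h2, -, h4⟩ := tree_decomp x y
  rw [h4]; positivity

theorem take_prefix_le (x y : List ℕ) (k : ℕ) (hk : k ≤ x.length) (h : x.take k <+: y) :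
    k ≤ lcpLen x y := by
  induction x generalizing y k with
  | nil => simp at hk; simp [hk]
  | cons a x ih =>
    cases k with
    | zero => simp
    | succ k =>
      cases y with
      | nil => simp at h
      | cons b y =>
        simp only [List.take_succ_cons, List.cons_prefix_cons] at h
        simp only [lcpLen, h.1, if_true]
        have := ih y k (by simpa using hk) h.2
        omega

theorem lip_of_edges {E : Type*} [SeminormedAddCommGroup E] (g : List ℕ → E) (h : ℕ) (Q : ℝ)
    (hg : ∀ x a, x.length < h → ‖g (x ++ [a]) - g x‖ ≤ Q) (x y : List ℕ)
    (hx : x.length ≤ h) (hy : y.length ≤ h) : ‖g x - g y‖ ≤ Q * treeDist x y := by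
  have key : ∀ w z : List ℕ, (z ++ w).length ≤ h → ‖g (z ++ w) - g z‖ ≤ Q * w.length := by
    intro w
    induction w with
    | nil => intro z _; simp
    | cons a w ih =>
      intro z hz
      have h1 := ih (z ++ [a]) (by simpa using hz)
      have h2 := hg z a (by simp at hz; omega)
      have h3 : z ++ a :: w = z ++ [a] ++ w := by simp
      rw [h3]
      have h4 : g (z ++ [a] ++ w) - g z = (g (z ++ [a] ++ w) - g (z ++ [a])) +
        (g (z ++ [a]) - g z) := by abel
      rw [h4]
      refine (norm_add_le _ _).trans ?_
      simp only [List.length_cons]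
      push_cast
      linarith
  obtain ⟨z, x1, y1, h1, h2, -, h4⟩ := tree_decomp x y
  rw [h4]
  subst h1 h2
  have e1 := key x1 z hx
  have e2 := key y1 z hy
  have h5 : g (z ++ x1) - g (z ++ y1) = (g (z ++ x1) - g z) - (g (z ++ y1) - g z) := by abel
  rw [h5]
  refine (norm_sub_le _ _).trans ?_
  linarith

def dbl (j : List ℕ → ℕ → ℕ) : List ℕ → List ℕ → List ℕ
  | _, [] => []
  | pre, a :: x => a :: j pre a :: dbl j (pre ++ [a, j pre a]) x

theorem dbl_length (j : List ℕ → ℕ → ℕ) (x pre : List ℕ) :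
    (dbl j pre x).length = 2 * x.length := by
  induction x generalizing pre with
  | nil => simp [dbl]
  | cons a x ih => simp [dbl, ih]; omega

theorem dbl_lcp (j : List ℕ → ℕ → ℕ) (x y pre : List ℕ) :
    lcpLen (dbl j pre x) (dbl j pre y) = 2 * lcpLen x y := by
  induction x generalizing y pre with
  | nil => simp [dbl, lcpLen]
  | cons a x ih =>
    cases y with
    | nil => simp [dbl, lcpLen]
    | cons b y =>
      by_cases hab : a = b
      · subst hab
        simp [dbl, lcpLen, ih]; omega
      · simp [dbl, lcpLen, hab]

theorem dbl_treeDist (j : List ℕ → ℕ → ℕ) (x y pre : List ℕ) :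
    treeDist (dbl j pre x) (dbl j pre y) = 2 * treeDist x y := by
  simp only [treeDist, dbl_lcp, dbl_length]
  push_cast
  ring

theorem dbl_snoc (j : List ℕ → ℕ → ℕ) (x pre : List ℕ) (a : ℕ) :
    dbl j pre (x ++ [a]) = dbl j pre x ++ [a, j (pre ++ dbl j pre x) a] := by
  induction x generalizing pre with
  | nil => simp [dbl]
  | cons b x ih => simp [dbl, ih]

theorem real_add_rpow_le (a b p : ℝ) (hp : 1 ≤ p) :
    |a + b| ^ p ≤ 2 ^ (p - 1) * (|a| ^ p + |b| ^ p) := by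
  have h := NNReal.rpow_add_le_mul_rpow_add_rpow ⟨|a|, abs_nonneg a⟩ ⟨|b|, abs_nonneg b⟩ hp
  have h2 : (|a| + |b|) ^ p ≤ 2 ^ (p - 1) * (|a| ^ p + |b| ^ p) := by exact_mod_cast h
  exact (Real.rpow_le_rpow (abs_nonneg _) (abs_add_le a b) (by linarith)).trans h2

def tailP (q : ℝ≥0∞) (N : ℕ) (x : lp (fun _ : ℕ => ℝ) q) : lp (fun _ : ℕ => ℝ) q :=
  x - ∑ i ∈ Finset.range N, lp.single q i (x i)

section
set_option linter.unusedSectionVars false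
variable {q : ℝ≥0∞} [Fact (1 ≤ q)]

theorem tailP_add (N : ℕ) (x y : lp (fun _ : ℕ => ℝ) q) :
    tailP q N (x + y) = tailP q N x + tailP q N y := by
  simp only [tailP, lp.coeFn_add, Pi.add_apply, lp.single_add, Finset.sum_add_distrib]
  abel

theorem tailP_sub (N : ℕ) (x y : lp (fun _ : ℕ => ℝ) q) :
    tailP q N (x - y) = tailP q N x - tailP q N y := by
  simp only [tailP, lp.coeFn_sub, Pi.sub_apply, lp.single_sub, Finset.sum_sub_distrib]
  abel

theorem norm_split (hq : 0 < q.toReal) (N : ℕ) (x : lp (fun _ : ℕ => ℝ) q) :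
    ‖x‖ ^ q.toReal = ∑ i ∈ Finset.range N, |x i| ^ q.toReal + ‖tailP q N x‖ ^ q.toReal := by
  have := lp.norm_compl_sum_single hq x (Finset.range N)
  simp only [Real.norm_eq_abs] at this
  simp only [tailP]
  linarith

theorem norm_le_head_tail (hq : 0 < q) (N : ℕ) (x : lp (fun _ : ℕ => ℝ) q) :
    ‖x‖ ≤ ∑ i ∈ Finset.range N, |x i| + ‖tailP q N x‖ := by
  let g : ℕ → lp (fun _ : ℕ => ℝ) q := fun i => lp.single q i (x i)
  have hg : ∀ i, ‖g i‖ = |x i| := by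
    intro i
    have h0 := lp.norm_single (E := fun _ : ℕ => ℝ) hq i (x i)
    rw [Real.norm_eq_abs] at h0
    exact h0
  have h : x = ∑ i ∈ Finset.range N, g i + tailP q N x := by
    simp [tailP, g]
  have h1 : ‖x‖ ≤ ‖∑ i ∈ Finset.range N, g i‖ + ‖tailP q N x‖ := by
    have h2 := norm_add_le (∑ i ∈ Finset.range N, g i) (tailP q N x)
    rwa [← h] at h2
  have h3 : ‖∑ i ∈ Finset.range N, g i‖ ≤ ∑ i ∈ Finset.range N, ‖g i‖ := norm_sum_le _ _
  simp only [hg] at h3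
  linarith

theorem exists_tail_small (hq : q ≠ ⊤) (u : lp (fun _ : ℕ => ℝ) q) (ε : ℝ) (hε : 0 < ε) :
    ∃ N, ‖tailP q N u‖ < ε := by
  have h := (lp.hasSum_single hq u).tendsto_sum_nat
  obtain ⟨N, hN⟩ := (Metric.tendsto_atTop.1 h) ε hε
  refine ⟨N, ?_⟩
  have := hN N le_rfl
  rw [dist_comm, dist_eq_norm] at this
  exact this

theorem exists_close (v : ℕ → lp (fun _ : ℕ => ℝ) q) (hq : q ≠ 0) (A : ℝ) (hv : ∀ j, ‖v j‖ ≤ A) (N : ℕ)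
    (ε : ℝ) (hε : 0 < ε) :
    ∃ j k, j ≠ k ∧ ∑ i ∈ Finset.range N, |(v j - v k) i| < ε := by
  let w : ℕ → (Fin N → ℝ) := fun j i => v j i
  have hw : ∀ j, w j ∈ Metric.closedBall (0 : Fin N → ℝ) A := by
    intro j
    rw [mem_closedBall_zero_iff]
    have hA : 0 ≤ A := (norm_nonneg _).trans (hv 0)
    rw [pi_norm_le_iff_of_nonneg hA]
    intro i
    exact (lp.norm_apply_le_norm hq (v j) i).trans (hv j)
  obtain ⟨a, -, φ, hφ, hlim⟩ := tendsto_subseq_of_bounded Metric.isBounded_closedBall hw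
  have hN : (0 : ℝ) < N + 1 := by positivity
  obtain ⟨M, hM⟩ := Metric.cauchySeq_iff.1 hlim.cauchySeq (ε / (N + 1)) (by positivity)
  refine ⟨φ M, φ (M + 1), (hφ (Nat.lt_succ_self M)).ne, ?_⟩
  have hd := hM M le_rfl (M + 1) (by omega)
  have h1 : ∀ i ∈ Finset.range N, |(v (φ M) - v (φ (M + 1))) i| ≤ ε / (N + 1) := by
    intro i hi
    have h2 := dist_le_pi_dist (w (φ M)) (w (φ (M + 1))) ⟨i, Finset.mem_range.1 hi⟩
    rw [Real.dist_eq] at h2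
    exact h2.trans hd.le
  refine (Finset.sum_le_card_nsmul _ _ _ h1).trans_lt ?_
  rw [Finset.card_range, nsmul_eq_mul, mul_div_assoc', div_lt_iff₀ hN]
  nlinarith

theorem fork (hq1 : 1 < q.toReal) : ∃ c : ℝ, 0 < c ∧
    ∀ (A : ℝ) (u : lp (fun _ : ℕ => ℝ) q) (v : ℕ → lp (fun _ : ℕ => ℝ) q),
      ‖u‖ ^ q.toReal ≤ A → (∀ j, ‖v j‖ ^ q.toReal ≤ A) → (∀ j k, j ≠ k → 2 ≤ ‖v j - v k‖) →
      ∃ j, ‖u + v j‖ ^ q.toReal ≤ 2 ^ q.toReal * (A - c) := by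
  set p := q.toReal with hp
  have hq0 : q ≠ 0 := by rintro rfl; simp at hp; linarith
  have hqt : q ≠ ⊤ := by rintro rfl; simp at hp; linarith
  have hp0 : 0 < p := by linarith
  set κ : ℝ := 2 ^ (p - 1) - 1 with hκ
  have hκ0 : 0 < κ := by
    have := Real.one_lt_rpow (x := 2) (z := p - 1) (by norm_num) (by linarith)
    linarith
  have h2p : (0 : ℝ) < 2 ^ p := by positivity
  have h2pp : (2 : ℝ) ^ p = 2 * 2 ^ (p - 1) := by
    rw [Real.rpow_sub_one (by norm_num)]; ring
  obtain ⟨ε, hε0, hε1, hε⟩ : ∃ ε : ℝ, 0 < ε ∧ ε < 1 ∧ (1 + 2 * ε) ^ p ≤ 1 + κ / 2 := by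
    have hc : Tendsto (fun ε : ℝ => (1 + 2 * ε) ^ p) (nhdsWithin 0 (Ioi 0)) (nhds 1) := by
      have : ContinuousAt (fun ε : ℝ => (1 + 2 * ε) ^ p) 0 := by
        apply ContinuousAt.rpow_const
        · fun_prop
        · left; norm_num
      have h := this.tendsto
      simp at h
      exact h.mono_left nhdsWithin_le_nhds
    have e1 := hc.eventually (eventually_le_nhds (show (1 : ℝ) < 1 + κ / 2 by linarith))
    have e2 : ∀ᶠ ε : ℝ in nhdsWithin 0 (Ioi 0), ε ∈ Ioo (0 : ℝ) 1 := Ioo_mem_nhdsGT one_pos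
    obtain ⟨ε, h1, h2⟩ := (e1.and e2).exists
    exact ⟨ε, h2.1, h2.2, h1⟩
  refine ⟨κ / 2 * (1 / 2) ^ p / 2 ^ p, by positivity, ?_⟩
  intro A u v hu hv hsep
  obtain ⟨N, hN⟩ := exists_tail_small hqt u ε hε0
  have hA : 0 ≤ A := (Real.rpow_nonneg (norm_nonneg _) _).trans hu
  have hvb : ∀ j, ‖v j‖ ≤ A ^ (1 / p) := by
    intro j
    have := Real.rpow_le_rpow (Real.rpow_nonneg (norm_nonneg _) _) (hv j) (show 0 ≤ 1 / p by positivity)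
    rwa [← Real.rpow_mul (norm_nonneg _), mul_one_div_cancel hp0.ne', Real.rpow_one] at this
  obtain ⟨j0, k0, hjk, hclose⟩ := exists_close v hq0 _ hvb N 1 one_pos
  have htail : ∃ j, 1 / 2 ≤ ‖tailP q N (v j)‖ := by
    by_contra hcon
    push Not at hcon
    have h1 := norm_le_head_tail (pos_iff_ne_zero.2 hq0) N (v j0 - v k0)
    have h2 := hsep j0 k0 hjk
    rw [tailP_sub] at h1
    have h3 := norm_sub_le (tailP q N (v j0)) (tailP q N (v k0))
    have h4 := hcon j0
    have h5 := hcon k0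
    linarith
  obtain ⟨j, hj⟩ := htail
  refine ⟨j, ?_⟩
  set τ := ‖tailP q N (v j)‖ with hτ
  have s1 := norm_split hp0 N (u + v j)
  have s2 := norm_split hp0 N u
  have s3 := norm_split hp0 N (v j)
  rw [← hp] at s1 s2 s3
  have hhead : ∑ i ∈ Finset.range N, |(u + v j) i| ^ p ≤
      2 ^ (p - 1) * (∑ i ∈ Finset.range N, |u i| ^ p + ∑ i ∈ Finset.range N, |v j i| ^ p) := by
    rw [← Finset.sum_add_distrib, Finset.mul_sum]
    exact Finset.sum_le_sum fun i _ => real_add_rpow_le _ _ _ hq1.le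
  have htl : ‖tailP q N (u + v j)‖ ^ p ≤ (1 + κ / 2) * τ ^ p := by
    have h1 : ‖tailP q N (u + v j)‖ ≤ (1 + 2 * ε) * τ := by
      rw [tailP_add]
      refine (norm_add_le _ _).trans ?_
      nlinarith
    calc ‖tailP q N (u + v j)‖ ^ p ≤ ((1 + 2 * ε) * τ) ^ p :=
          Real.rpow_le_rpow (norm_nonneg _) h1 hp0.le
      _ = (1 + 2 * ε) ^ p * τ ^ p := Real.mul_rpow (by positivity) (norm_nonneg _)
      _ ≤ _ := by gcongr
  have hτp : (1 / 2 : ℝ) ^ p ≤ τ ^ p := Real.rpow_le_rpow (by norm_num) hj hp0.le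
  have hut : 0 ≤ ‖tailP q N u‖ ^ p := Real.rpow_nonneg (norm_nonneg _) _
  have hsum : ∑ i ∈ Finset.range N, |u i| ^ p + ∑ i ∈ Finset.range N, |v j i| ^ p ≤
      2 * A - τ ^ p := by
    have := hv j
    linarith
  have hB : (0 : ℝ) ≤ 2 ^ (p - 1) := by positivity
  have h6 := mul_le_mul_of_nonneg_left hsum hB
  have h7 : 2 ^ p * (A - κ / 2 * (1 / 2) ^ p / 2 ^ p) = 2 ^ p * A - κ / 2 * (1 / 2) ^ p := by
    field_simp
  rw [h7, s1, h2pp]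
  have h8 : (2 : ℝ) ^ (p - 1) = κ + 1 := by rw [hκ]; ring
  rw [h8] at h6 hhead ⊢
  nlinarith

theorem tree_lower (hq1 : 1 < q.toReal) : ∃ c : ℝ, 0 < c ∧
    ∀ (n : ℕ) (A : ℝ) (f : List ℕ → lp (fun _ : ℕ => ℝ) q),
      (∀ x a, x.length < 2 ^ n → ‖f (x ++ [a]) - f x‖ ^ q.toReal ≤ A) →
      (∀ x y, x.length ≤ 2 ^ n → y.length ≤ 2 ^ n → treeDist x y ≤ ‖f x - f y‖) →
      c * n ≤ A := by
  obtain ⟨c, hc, hfork⟩ := fork (q := q) hq1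
  refine ⟨c, hc, ?_⟩
  intro n
  induction n with
  | zero =>
    intro A f h1 h2
    have := h1 [] 0 (by simp)
    have h3 : 0 ≤ ‖f ([] ++ [0]) - f []‖ ^ q.toReal := Real.rpow_nonneg (norm_nonneg _) _
    simp
    linarith
  | succ n ih =>
    intro A f h1 h2
    have hpow : 2 ^ (n + 1) = 2 * 2 ^ n := by ring
    rw [hpow] at h1 h2
    have hj : ∀ (x : List ℕ) (a : ℕ), ∃ j, x.length + 2 ≤ 2 * 2 ^ n →
        ‖f (x ++ [a, j]) - f x‖ ^ q.toReal ≤ 2 ^ q.toReal * (A - c) := by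
      intro x a
      by_cases hx : x.length + 2 ≤ 2 * 2 ^ n
      · have := hfork A (f (x ++ [a]) - f x) (fun j => f (x ++ [a] ++ [j]) - f (x ++ [a]))
          (h1 x a (by omega)) (fun j => h1 _ j (by simp; omega)) ?_
        · obtain ⟨j, hj⟩ := this
          refine ⟨j, fun _ => ?_⟩
          have e : f (x ++ [a]) - f x + (f (x ++ [a] ++ [j]) - f (x ++ [a])) =
            f (x ++ [a, j]) - f x := by
            simp
          rw [e] at hj
          exact hj
        · intro j k hjk
          have h3 := h2 (x ++ [a] ++ [j]) (x ++ [a] ++ [k]) (by simp; omega) (by simp; omega)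
          have h4 : lcpLen (x ++ [a] ++ [j]) (x ++ [a] ++ [k]) = x.length + 1 := by
            clear * - hjk
            induction x with
            | nil => simp [lcpLen, hjk]
            | cons b x ih => simp only [List.cons_append, lcpLen, ih]; simp
          have h5 : treeDist (x ++ [a] ++ [j]) (x ++ [a] ++ [k]) = 2 := by
            simp only [treeDist, h4]
            simp
            ring
          rw [h5] at h3
          simpa using h3
      · exact ⟨0, fun h => absurd h hx⟩
    choose j hj using hj
    have key := ih (A - c) (fun x => (1 / 2 : ℝ) • f (dbl j [] x)) ?_ ?_
    · push_cast
      linarith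
    · intro x a hx
      have h3 := hj (dbl j [] x) a (by rw [dbl_length]; omega)
      simp only [dbl_snoc, List.nil_append, ← smul_sub, norm_smul]
      rw [Real.mul_rpow (norm_nonneg _) (norm_nonneg _)]
      have h4 : ‖(1 / 2 : ℝ)‖ ^ q.toReal = (2 ^ q.toReal)⁻¹ := by
        rw [← Real.inv_rpow (by norm_num)]; norm_num
      rw [h4, inv_mul_le_iff₀ (by positivity)]
      exact h3
    · intro x y hx hy
      have h3 := h2 (dbl j [] x) (dbl j [] y) (by rw [dbl_length]; omega) (by rw [dbl_length]; omega)
      rw [dbl_treeDist] at h3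
      simp only [← smul_sub, norm_smul]
      norm_num
      linarith

end

def rad (S t : Finset (List ℕ)) (a : List ℕ → ℝ) : ℝ := ∑ s ∈ S, if s ∈ t then a s else - a s

theorem rad_sub (S t : Finset (List ℕ)) (a b : List ℕ → ℝ) :
    rad S t (a - b) = rad S t a - rad S t b := by
  simp only [rad, ← Finset.sum_sub_distrib]
  refine Finset.sum_congr rfl fun s _ => ?_
  split_ifs <;> simp
  ring

theorem rad_insert1 (S t : Finset (List ℕ)) (b : List ℕ) (hb : b ∉ S) (ht : t ⊆ S)
    (a : List ℕ → ℝ) : rad (insert b S) t a = rad S t a - a b := by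
  have : b ∉ t := fun h => hb (ht h)
  simp only [rad, Finset.sum_insert hb, this, if_false]
  ring

theorem rad_insert2 (S t : Finset (List ℕ)) (b : List ℕ) (hb : b ∉ S)
    (a : List ℕ → ℝ) : rad (insert b S) (insert b t) a = rad S t a + a b := by
  simp only [rad, Finset.sum_insert hb, Finset.mem_insert_self, if_true]
  rw [add_comm]
  congr 1
  refine Finset.sum_congr rfl fun s hs => ?_
  have : s ≠ b := fun h => hb (h ▸ hs)
  simp [Finset.mem_insert, this]

theorem rad_moment2 (S : Finset (List ℕ)) (a : List ℕ → ℝ) :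
    ∑ t ∈ S.powerset, rad S t a ^ 2 = 2 ^ S.card * ∑ s ∈ S, a s ^ 2 := by
  induction S using Finset.induction_on with
  | empty => simp [rad]
  | insert b S hb ih =>
    rw [Finset.sum_powerset_insert hb, ← Finset.sum_add_distrib]
    have : ∀ t ∈ S.powerset, rad (insert b S) t a ^ 2 + rad (insert b S) (insert b t) a ^ 2 =
        2 * rad S t a ^ 2 + 2 * a b ^ 2 := by
      intro t ht
      rw [rad_insert1 S t b hb (Finset.mem_powerset.1 ht), rad_insert2 S t b hb]
      ring
    rw [Finset.sum_congr rfl this, Finset.sum_add_distrib, ← Finset.mul_sum, ih,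
      Finset.sum_const, Finset.card_powerset, Finset.card_insert_of_notMem hb,
      Finset.sum_insert hb, nsmul_eq_mul]
    push_cast
    ring

theorem rad_moment4 (S : Finset (List ℕ)) (a : List ℕ → ℝ) :
    ∑ t ∈ S.powerset, rad S t a ^ 4 ≤ 3 * 2 ^ S.card * (∑ s ∈ S, a s ^ 2) ^ 2 := by
  induction S using Finset.induction_on with
  | empty => simp [rad]
  | insert b S hb ih =>
    rw [Finset.sum_powerset_insert hb, ← Finset.sum_add_distrib]
    have : ∀ t ∈ S.powerset, rad (insert b S) t a ^ 4 + rad (insert b S) (insert b t) a ^ 4 =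
        2 * rad S t a ^ 4 + 12 * a b ^ 2 * rad S t a ^ 2 + 2 * a b ^ 4 := by
      intro t ht
      rw [rad_insert1 S t b hb (Finset.mem_powerset.1 ht), rad_insert2 S t b hb]
      ring
    rw [Finset.sum_congr rfl this, Finset.sum_add_distrib, Finset.sum_add_distrib,
      ← Finset.mul_sum, ← Finset.mul_sum, rad_moment2,
      Finset.sum_const, Finset.card_powerset, Finset.card_insert_of_notMem hb,
      Finset.sum_insert hb, nsmul_eq_mul]
    push_cast
    have h1 : (0 : ℝ) ≤ 2 ^ S.card * a b ^ 4 := by positivity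
    have h2 : 3 * 2 ^ (S.card + 1) * (a b ^ 2 + ∑ s ∈ S, a s ^ 2) ^ 2 =
      2 * (3 * 2 ^ S.card * (∑ s ∈ S, a s ^ 2) ^ 2) + 12 * a b ^ 2 * (2 ^ S.card * ∑ s ∈ S, a s ^ 2)
        + 6 * (2 ^ S.card * a b ^ 4) := by ring
    rw [h2]
    linarith

theorem pw_upper (p t σ : ℝ) (hp1 : 1 < p) (hp2 : p < 2) (ht : 0 ≤ t) (hσ : 0 < σ) :
    σ ^ (2 - p) * t ^ p ≤ σ ^ 2 + t ^ 2 := by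
  have e : ∀ z : ℝ, 0 < z → z ^ (2 - p) * z ^ p = z ^ 2 := by
    intro z hz
    rw [← Real.rpow_add hz]
    simp
  rcases le_total t σ with h | h
  · have h1 : t ^ p ≤ σ ^ p := Real.rpow_le_rpow ht h (by linarith)
    have h2 := mul_le_mul_of_nonneg_left h1 (Real.rpow_nonneg hσ.le (2 - p))
    rw [e σ hσ] at h2
    nlinarith
  · have h1 : σ ^ (2 - p) ≤ t ^ (2 - p) := Real.rpow_le_rpow hσ.le h (by linarith)
    have h2 := mul_le_mul_of_nonneg_right h1 (Real.rpow_nonneg ht p)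
    rw [e t (hσ.trans_le h)] at h2
    nlinarith

theorem pw_lower (p t M : ℝ) (hp1 : 1 < p) (hp2 : p < 2) (ht : 0 ≤ t) (hM : 0 < M) :
    t ^ 2 - t ^ 4 / M ^ 2 ≤ M ^ (2 - p) * t ^ p := by
  have hr : 0 ≤ M ^ (2 - p) * t ^ p := by positivity
  rcases le_total t M with h | h
  · rcases ht.eq_or_lt with h0 | h0
    · subst h0
      simp at hr ⊢
      exact hr
    · have h1 : t ^ (2 - p) ≤ M ^ (2 - p) := Real.rpow_le_rpow ht h (by linarith)
      have h2 := mul_le_mul_of_nonneg_right h1 (Real.rpow_nonneg ht p)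
      have h3 : t ^ (2 - p) * t ^ p = t ^ 2 := by
        rw [← Real.rpow_add h0]
        simp
      have h4 : 0 ≤ t ^ 4 / M ^ 2 := by positivity
      linarith
  · have h1 : t ^ 2 ≤ t ^ 4 / M ^ 2 := by
      rw [le_div_iff₀ (by positivity)]
      have : M ^ 2 ≤ t ^ 2 := by gcongr
      nlinarith [sq_nonneg t]
    linarith

theorem khinchine (p : ℝ) (hp1 : 1 < p) (hp2 : p < 2) (S : Finset (List ℕ)) (a : List ℕ → ℝ) :
    ∑ t ∈ S.powerset, |rad S t a| ^ p ≤ 2 ^ S.card * (2 * √(∑ s ∈ S, a s ^ 2)) ^ p ∧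
    2 ^ S.card * (√(∑ s ∈ S, a s ^ 2) / 8) ^ p ≤ ∑ t ∈ S.powerset, |rad S t a| ^ p := by
  set V := ∑ s ∈ S, a s ^ 2 with hV
  have hV0 : 0 ≤ V := Finset.sum_nonneg fun _ _ => sq_nonneg _
  set σ := √V with hσ
  have hσ2 : σ ^ 2 = V := Real.sq_sqrt hV0
  have m2 := rad_moment2 S a
  have m4 := rad_moment4 S a
  rw [← hV, ← hσ2] at m2 m4
  have hσ0 : 0 ≤ σ := Real.sqrt_nonneg _
  have hp0 : 0 < p := by linarith
  have hK : (0 : ℝ) < 2 ^ S.card := by positivity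
  set K : ℝ := 2 ^ S.card with hKdef
  rcases hσ0.eq_or_lt with h0 | h0
  · rw [← h0] at m2 ⊢
    have hz : ∀ t ∈ S.powerset, rad S t a ^ 2 = 0 := by
      rw [← Finset.sum_eq_zero_iff_of_nonneg (fun _ _ => sq_nonneg _)]
      simpa using m2
    have hz2 : ∑ t ∈ S.powerset, |rad S t a| ^ p = 0 := by
      refine Finset.sum_eq_zero fun t ht => ?_
      have := pow_eq_zero_iff (two_ne_zero) |>.1 (hz t ht)
      rw [this]
      simp [hp0.ne']
    rw [hz2]
    simp [hp0.ne']
  · set P := ∑ t ∈ S.powerset, |rad S t a| ^ p with hP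
    have e : ∀ z : ℝ, 0 < z → z ^ (2 - p) * z ^ p = z ^ 2 := by
      intro z hz
      rw [← Real.rpow_add hz]
      simp
    have hcard : ((S.powerset.card : ℕ) : ℝ) = K := by
      rw [Finset.card_powerset]; push_cast; rfl
    constructor
    · have h1 : σ ^ (2 - p) * P ≤ 2 * K * σ ^ 2 := by
        rw [hP, Finset.mul_sum]
        refine (Finset.sum_le_sum fun t _ => pw_upper p _ σ hp1 hp2 (abs_nonneg (rad S t a)) h0).trans ?_
        simp only [sq_abs]
        rw [Finset.sum_add_distrib, m2, Finset.sum_const, nsmul_eq_mul, hcard]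
        linarith
      have h2 : P ≤ 2 * K * σ ^ p := by
        rw [← e σ h0] at h1
        have h3 : 0 < σ ^ (2 - p) := by positivity
        refine le_of_mul_le_mul_left ?_ h3
        linarith
      refine h2.trans ?_
      rw [Real.mul_rpow (by norm_num) hσ0]
      have h4 : (2 : ℝ) ≤ 2 ^ p := by
        simpa using Real.rpow_le_rpow_of_exponent_le (x := 2) (by norm_num) hp1.le
      have h5 : 0 ≤ K * σ ^ p := by positivity
      nlinarith
    · have hM : 0 < 2 * σ := by positivity
      have h1 : K * σ ^ 2 / 4 ≤ (2 * σ) ^ (2 - p) * P := by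
        rw [hP, Finset.mul_sum]
        refine le_trans ?_ (Finset.sum_le_sum fun t _ =>
          pw_lower p _ (2 * σ) hp1 hp2 (abs_nonneg (rad S t a)) hM)
        have h4 : ∀ z : ℝ, |z| ^ 4 = z ^ 4 := fun z => by
          rw [show (4 : ℕ) = 2 * 2 by norm_num, pow_mul, sq_abs, ← pow_mul]
        simp only [sq_abs, h4]
        rw [Finset.sum_sub_distrib, m2, ← Finset.sum_div]
        have h5 : (∑ t ∈ S.powerset, rad S t a ^ 4) / (2 * σ) ^ 2 ≤ 3 / 4 * (K * σ ^ 2) := by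
          rw [div_le_iff₀ (by positivity)]
          refine m4.trans (le_of_eq ?_)
          ring
        linarith
      have h2 : K * ((2 * σ) ^ p / 16) ≤ P := by
        have h3 : 0 < (2 * σ) ^ (2 - p) := by positivity
        refine le_of_mul_le_mul_left ?_ h3
        have := e (2 * σ) hM
        calc (2 * σ) ^ (2 - p) * (K * ((2 * σ) ^ p / 16)) =
            K * ((2 * σ) ^ (2 - p) * (2 * σ) ^ p) / 16 := by ring
          _ = K * σ ^ 2 / 4 := by rw [this]; ring
          _ ≤ _ := h1
      refine le_trans ?_ h2
      gcongr
      rw [show σ / 8 = (2 * σ) / 16 by ring, Real.div_rpow hM.le (by norm_num)]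
      gcongr
      simpa using Real.rpow_le_rpow_of_exponent_le (x := 16) (by norm_num) hp1.le

theorem hilbert_to_lp {q : ℝ≥0∞} (hq1 : 1 < q.toReal) (hq2 : q.toReal < 2)
    (S : Finset (List ℕ)) : ∃ T : (List ℕ → ℝ) → lp (fun _ : ℕ => ℝ) q,
      (∀ a b, T (a - b) = T a - T b) ∧ ∀ a, ‖T a‖ ≤ 2 * √(∑ s ∈ S, a s ^ 2) ∧
        √(∑ s ∈ S, a s ^ 2) ≤ 8 * ‖T a‖ := by
  set p := q.toReal with hp
  have hp0 : 0 < p := by linarith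
  let enc : Finset (List ℕ) → ℕ := Encodable.encode
  have henc : Function.Injective enc := Encodable.encode_injective
  let dec : ℕ → Finset (List ℕ) := Function.invFun enc
  have hdec : ∀ t, dec (enc t) = t := Function.leftInverse_invFun henc
  set K : ℝ := 2 ^ S.card with hK
  have hK0 : 0 < K := by positivity
  let val : (List ℕ → ℝ) → ℕ → ℝ := fun a i => K ^ (-(1 / p)) * rad S (dec i) a
  let I : Finset ℕ := S.powerset.image enc
  let T : (List ℕ → ℝ) → lp (fun _ : ℕ => ℝ) q := fun a => ∑ i ∈ I, lp.single q i (val a i)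
  have hT : ∀ a, K * ‖T a‖ ^ p = ∑ t ∈ S.powerset, |rad S t a| ^ p := by
    intro a
    have h1 := lp.norm_sum_single (E := fun _ : ℕ => ℝ) (p := q) hp0 (val a) I
    have h2 : ‖T a‖ ^ p = ∑ i ∈ I, ‖val a i‖ ^ p := h1
    rw [h2, Finset.sum_image henc.injOn, Finset.mul_sum]
    refine Finset.sum_congr rfl fun t _ => ?_
    simp only [val, hdec, Real.norm_eq_abs, abs_mul]
    rw [Real.mul_rpow (abs_nonneg _) (abs_nonneg _), abs_of_pos (by positivity),
      ← Real.rpow_mul hK0.le]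
    have : -(1 / p) * p = -1 := by field_simp
    rw [this, Real.rpow_neg_one]
    field_simp
  refine ⟨T, ?_, ?_⟩
  · intro a b
    simp only [T, ← Finset.sum_sub_distrib, ← lp.single_sub]
    refine Finset.sum_congr rfl fun i _ => ?_
    congr 1
    simp only [val, rad_sub]
    ring
  · intro a
    obtain ⟨h1, h2⟩ := khinchine p hq1 hq2 S a
    rw [← hT a] at h1 h2
    have h3 := le_of_mul_le_mul_left h1 hK0
    have h4 := le_of_mul_le_mul_left h2 hK0
    have hn : 0 ≤ ‖T a‖ := lp.norm_nonneg' _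
    rw [Real.rpow_le_rpow_iff hn (by positivity) hp0] at h3
    rw [Real.rpow_le_rpow_iff (by positivity) hn hp0] at h4
    exact ⟨h3, by linarith⟩

def wt (x s : List ℕ) : ℝ := if s <+: x then √((x.length - s.length : ℕ) + 1 : ℝ) else 0

theorem sqrt_diff_sq (i : ℕ) : (√((i + 1 : ℕ) + 1 : ℝ) - √((i : ℕ) + 1 : ℝ)) ^ 2 ≤ ((i : ℝ) + 1)⁻¹ := by
  push_cast
  set u : ℝ := (i : ℝ) + 1 with hu
  have hu0 : 0 < u := by positivity
  have h1 : √(u + 1) ^ 2 = u + 1 := Real.sq_sqrt (by positivity)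
  have h2 : √u ^ 2 = u := Real.sq_sqrt hu0.le
  have h3 : 0 < √u := Real.sqrt_pos.2 hu0
  have h4 : √u ≤ √(u + 1) := Real.sqrt_le_sqrt (by linarith)
  rw [← one_div, le_div_iff₀ hu0]
  have h5 : (√(u + 1) - √u) * √u ≤ 1 := by nlinarith
  have h6 : 0 ≤ (√(u + 1) - √u) * √u := mul_nonneg (by linarith) h3.le
  calc (√(u + 1) - √u) ^ 2 * u = ((√(u + 1) - √u) * √u) ^ 2 := by rw [mul_pow, h2]
    _ ≤ 1 := by nlinarith

theorem take_injOn (x : List ℕ) (R : Finset ℕ) (hR : ∀ k ∈ R, k ≤ x.length) :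
    Set.InjOn (fun k => x.take k) R := by
  intro i hi j hj hij
  have := congrArg List.length hij
  simp only [List.length_take] at this
  have h1 := hR i hi
  have h2 := hR j hj
  omega

theorem wt_edge (S : Finset (List ℕ)) (n : ℕ) (x : List ℕ) (a : ℕ) (hx : x.length < 2 ^ n) :
    ∑ s ∈ S, (wt (x ++ [a]) s - wt x s) ^ 2 ≤ n + 2 := by
  set y := x ++ [a] with hy
  have hyl : y.length = x.length + 1 := by simp [hy]
  have hzero : ∀ s, ¬ s <+: y → wt y s - wt x s = 0 := by
    intro s hs
    have : ¬ s <+: x := fun h => hs (h.trans (List.prefix_append _ _))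
    simp [wt, hs, this]
  let R := Finset.range (x.length + 2)
  have hR : ∀ k ∈ R, k ≤ y.length := by
    intro k hk
    have := Finset.mem_range.1 hk
    omega
  have h1 : ∑ s ∈ S, (wt y s - wt x s) ^ 2 ≤ ∑ s ∈ R.image (fun k => y.take k),
      (wt y s - wt x s) ^ 2 := by
    rw [← Finset.sum_filter_add_sum_filter_not S (fun s => s <+: y)]
    have h2 : ∑ s ∈ S.filter (fun s => ¬ s <+: y), (wt y s - wt x s) ^ 2 = 0 := by
      refine Finset.sum_eq_zero fun s hs => ?_
      rw [hzero s (Finset.mem_filter.1 hs).2]; simp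
    rw [h2, add_zero]
    refine Finset.sum_le_sum_of_subset_of_nonneg ?_ fun _ _ _ => sq_nonneg _
    intro s hs
    have h3 := (Finset.mem_filter.1 hs).2
    refine Finset.mem_image.2 ⟨s.length, ?_, (List.prefix_iff_eq_take.1 h3).symm⟩
    have := h3.length_le
    exact Finset.mem_range.2 (by omega)
  refine h1.trans ?_
  rw [Finset.sum_image (take_injOn y R hR), Finset.sum_range_succ]
  have hlast : (wt y (y.take (x.length + 1)) - wt x (y.take (x.length + 1))) ^ 2 = 1 := by
    have e : y.take (x.length + 1) = y := by rw [← hyl, List.take_length]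
    rw [e]
    have : ¬ y <+: x := fun h => by have := h.length_le; omega
    simp [wt, this]
  rw [hlast]
  have hterm : ∀ k ∈ Finset.range (x.length + 1),
      (wt y (y.take k) - wt x (y.take k)) ^ 2 ≤ (((x.length - k : ℕ) : ℝ) + 1)⁻¹ := by
    intro k hk
    have hk1 : k ≤ x.length := by have := Finset.mem_range.1 hk; omega
    have e : y.take k = x.take k := by rw [hy, List.take_append_of_le_length hk1]
    have p1 : y.take k <+: y := List.take_prefix _ _
    have p2 : y.take k <+: x := by rw [e]; exact List.take_prefix _ _
    have l : (y.take k).length = k := by simp [hyl]; omega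
    simp only [wt, p1, p2, if_true, l, hyl]
    rw [show x.length + 1 - k = (x.length - k) + 1 by omega]
    exact sqrt_diff_sq _
  have h5 := Finset.sum_le_sum hterm
  have h6 : ∑ k ∈ Finset.range (x.length + 1), (((x.length - k : ℕ) : ℝ) + 1)⁻¹ =
      ∑ k ∈ Finset.range (x.length + 1), ((k : ℝ) + 1)⁻¹ := by
    have := Finset.sum_range_reflect (fun k : ℕ => ((k : ℝ) + 1)⁻¹) (x.length + 1)
    simpa using this
  have h7 := harmonic_le_one_add_log (x.length + 1)
  have h8 : ((harmonic (x.length + 1) : ℚ) : ℝ) =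
      ∑ k ∈ Finset.range (x.length + 1), ((k : ℝ) + 1)⁻¹ := by
    simp [harmonic]
  have h9 : Real.log ((x.length + 1 : ℕ) : ℝ) ≤ n := by
    calc Real.log ((x.length + 1 : ℕ) : ℝ) ≤ Real.log ((2 : ℝ) ^ n) := by
          apply Real.log_le_log (by positivity)
          exact_mod_cast hx
      _ = n * Real.log 2 := by rw [Real.log_pow]
      _ ≤ n * 1 := by
          gcongr
          have := Real.log_two_lt_d9
          linarith
      _ = n := mul_one _
  rw [h6] at h5
  rw [h8] at h7
  linarith

theorem wt_lower (S : Finset (List ℕ)) (x y : List ℕ) (hS : ∀ s, s <+: x → s ∈ S) :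
    ((x.length : ℝ) - lcpLen x y) ^ 2 / 2 ≤ ∑ s ∈ S, (wt x s - wt y s) ^ 2 := by
  set m := lcpLen x y with hm
  have hmx : m ≤ x.length := by
    obtain ⟨z, x1, y1, h1, -, h3, -⟩ := tree_decomp x y
    rw [hm, h3, h1]; simp
  let R := Finset.Ioc m x.length
  have hR : ∀ k ∈ R, k ≤ x.length := fun k hk => (Finset.mem_Ioc.1 hk).2
  have h1 : ∑ s ∈ R.image (fun k => x.take k), (wt x s - wt y s) ^ 2 ≤
      ∑ s ∈ S, (wt x s - wt y s) ^ 2 := by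
    refine Finset.sum_le_sum_of_subset_of_nonneg ?_ fun _ _ _ => sq_nonneg _
    intro s hs
    obtain ⟨k, -, rfl⟩ := Finset.mem_image.1 hs
    exact hS _ (List.take_prefix _ _)
  refine le_trans ?_ h1
  rw [Finset.sum_image (take_injOn x R hR)]
  have h2 : ∀ k ∈ R, (wt x (x.take k) - wt y (x.take k)) ^ 2 = ((x.length : ℝ) - k + 1) := by
    intro k hk
    have hk2 := Finset.mem_Ioc.1 hk
    have hn : ¬ x.take k <+: y := fun h => by
      have := take_prefix_le x y k hk2.2 h
      omega
    have l : (x.take k).length = k := by simp; omega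
    simp only [wt, List.take_prefix, hn, if_true, if_false, l, sub_zero]
    rw [Real.sq_sqrt (by positivity), Nat.cast_sub hk2.2]
  rw [Finset.sum_congr rfl h2]
  have h3 : ∀ m l : ℕ, m ≤ l → ((l : ℝ) - m) ^ 2 / 2 ≤ ∑ k ∈ Finset.Ioc m l, ((l : ℝ) - k + 1) := by
    intro m l hml
    obtain ⟨d, rfl⟩ := Nat.exists_eq_add_of_le hml
    clear hml
    induction d with
    | zero => simp
    | succ d ih =>
      rw [← add_assoc, Finset.sum_Ioc_succ_top (by omega)]
      have e : ∑ k ∈ Finset.Ioc m (m + d), (((m + d + 1 : ℕ) : ℝ) - k + 1) =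
          ∑ k ∈ Finset.Ioc m (m + d), (((m + d : ℕ) : ℝ) - k + 1) + d := by
        have : ∀ k ∈ Finset.Ioc m (m + d), (((m + d + 1 : ℕ) : ℝ) - k + 1) =
          (((m + d : ℕ) : ℝ) - k + 1) + 1 := by intro k _; push_cast; ring
        rw [Finset.sum_congr rfl this, Finset.sum_add_distrib]
        simp
      rw [e]
      push_cast at ih ⊢
      nlinarith
  exact h3 m x.length hmx

theorem finite_embed {q : ℝ≥0∞} [Fact (1 ≤ q)] (hq1 : 1 < q.toReal) (hq2 : q.toReal < 2)
    (n : ℕ) (F : Set (TreeOmega (2 ^ n))) (hF : F.Finite) :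
    cDist F (lp (fun _ : ℕ => ℝ) q) (fun a b : F => tDist (2 ^ n) a.1 b.1) (fun a b => ‖a - b‖)
      ≤ ENNReal.ofReal (48 * √(n + 2)) := by
  let S : Finset (List ℕ) := hF.toFinset.biUnion fun x => x.1.inits.toFinset
  have hS : ∀ x ∈ F, ∀ s, s <+: x.1 → s ∈ S := by
    intro x hx s hs
    refine Finset.mem_biUnion.2 ⟨x, hF.mem_toFinset.2 hx, ?_⟩
    rw [List.mem_toFinset, List.mem_inits]
    exact hs
  obtain ⟨T, hT, hTb⟩ := hilbert_to_lp hq1 hq2 S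
  let g : List ℕ → lp (fun _ : ℕ => ℝ) q := fun x => T (wt x)
  have hg : ∀ x a, x.length < 2 ^ n → ‖g (x ++ [a]) - g x‖ ≤ 2 * √(n + 2) := by
    intro x a hx
    have h1 := (hTb (wt (x ++ [a]) - wt x)).1
    rw [hT] at h1
    refine h1.trans ?_
    gcongr
    exact wt_edge S n x a hx
  have hlip := lip_of_edges g (2 ^ n) _ hg
  have hco : ∀ x ∈ F, ∀ y ∈ F, treeDist x.1 y.1 ≤ 24 * ‖g x.1 - g y.1‖ := by
    intro x hx y hy
    have h1 := (hTb (wt x.1 - wt y.1)).2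
    rw [hT] at h1
    have l1 := wt_lower S x.1 y.1 (hS x hx)
    have l2 := wt_lower S y.1 x.1 (hS y hy)
    have e1 : ∑ s ∈ S, (wt y.1 s - wt x.1 s) ^ 2 = ∑ s ∈ S, (wt x.1 s - wt y.1 s) ^ 2 :=
      Finset.sum_congr rfl fun s _ => by ring
    rw [e1] at l2
    have e2 := treeDist_symm x.1 y.1
    simp only [treeDist] at e2
    have e3 : (lcpLen y.1 x.1 : ℝ) = lcpLen x.1 y.1 := by linarith
    rw [e3] at l2
    have hs : treeDist x.1 y.1 / 3 ≤ √(∑ s ∈ S, (wt x.1 - wt y.1) s ^ 2) := by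
      apply Real.le_sqrt_of_sq_le
      simp only [Pi.sub_apply, treeDist]
      set A := (x.1.length : ℝ) - lcpLen x.1 y.1
      set B := (y.1.length : ℝ) - lcpLen x.1 y.1
      have e4 : (x.1.length : ℝ) + y.1.length - 2 * lcpLen x.1 y.1 = A + B := by
        simp only [A, B]; ring
      rw [e4]
      nlinarith [sq_nonneg (A - B), sq_nonneg A, sq_nonneg B]
    have h2 : ‖g x.1 - g y.1‖ = ‖T (wt x.1) - T (wt y.1)‖ := rfl
    rw [h2]
    linarith
  unfold cDist
  refine iInf₂_le (48 * √(n + 2)) ?_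
  refine ⟨fun x => g x.1.1, ?_, 2 * √(n + 2), 24, ?_, ?_, by ring⟩
  · intro x y hxy
    have h1 := hco x.1 x.2 y.1 y.2
    have h2 : g x.1.1 = g y.1.1 := hxy
    rw [h2] at h1
    simp at h1
    exact Subtype.ext (Subtype.ext (eq_of_treeDist_le _ _ h1))
  · intro x y
    exact hlip x.1.1 y.1.1 x.1.2 y.1.2
  · intro x y
    exact hco x.1 x.2 y.1 y.2

theorem whole_lower {q : ℝ≥0∞} [Fact (1 ≤ q)] (hq1 : 1 < q.toReal) : ∃ c : ℝ, 0 < c ∧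
    ∀ (n : ℕ) (B : ℝ), 0 ≤ B →
      cDist (TreeOmega (2 ^ n)) (lp (fun _ : ℕ => ℝ) q) (tDist (2 ^ n)) (fun a b => ‖a - b‖)
        ≤ ENNReal.ofReal B → c * n ≤ (B + 1) ^ q.toReal := by
  obtain ⟨c, hc, hlow⟩ := tree_lower (q := q) hq1
  refine ⟨c, hc, ?_⟩
  intro n B hB hD
  have hlt : cDist (TreeOmega (2 ^ n)) (lp (fun _ : ℕ => ℝ) q) (tDist (2 ^ n))
      (fun a b => ‖a - b‖) < ENNReal.ofReal (B + 1) :=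
    hD.trans_lt ((ENNReal.ofReal_lt_ofReal_iff (by linarith)).2 (by linarith))
  unfold cDist at hlt
  simp only [iInf_lt_iff] at hlt
  obtain ⟨D, ⟨f, hinj, L, C, hL, hC, rfl⟩, hlt⟩ := hlt
  have hLC : L * C < B + 1 := (ENNReal.ofReal_lt_ofReal_iff (by linarith)).1 hlt
  have hone : 1 ≤ 2 ^ n := Nat.one_le_two_pow
  have hC0 : 0 ≤ C := by
    by_contra hneg
    push Not at hneg
    have h1 := hC ⟨[], by simp⟩ ⟨[0], by simpa using hone⟩
    have h2 : tDist (2 ^ n) ⟨[], by simp⟩ ⟨[0], by simpa using hone⟩ = 1 := by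
      simp [tDist, treeDist, lcpLen]
    rw [h2] at h1
    have h3 : 0 ≤ ‖f ⟨[], by simp⟩ - f ⟨[0], by simpa using hone⟩‖ := norm_nonneg _
    nlinarith
  let g : List ℕ → lp (fun _ : ℕ => ℝ) q := fun x =>
    if h : x.length ≤ 2 ^ n then C • f ⟨x, h⟩ else 0
  refine hlow n _ g ?_ ?_
  · intro x a hx
    have hx1 : x.length ≤ 2 ^ n := hx.le
    have hx2 : (x ++ [a]).length ≤ 2 ^ n := by simpa using hx
    have e : g (x ++ [a]) - g x = C • (f ⟨x ++ [a], hx2⟩ - f ⟨x, hx1⟩) := by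
      simp only [g, dif_pos hx1, dif_pos hx2, smul_sub]
    have h1 := hL ⟨x ++ [a], hx2⟩ ⟨x, hx1⟩
    have h2 : tDist (2 ^ n) ⟨x ++ [a], hx2⟩ ⟨x, hx1⟩ = 1 := by
      have h4 : lcpLen (x ++ [a]) x = x.length := by
        clear * -
        induction x with
        | nil => simp [lcpLen]
        | cons b x ih => simp [lcpLen, ih]
      simp only [tDist, treeDist, h4]
      simp
      ring
    rw [h2, mul_one] at h1
    rw [e, norm_smul, Real.norm_eq_abs, abs_of_nonneg hC0]
    apply Real.rpow_le_rpow (by positivity) _ (by linarith)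
    have := mul_le_mul_of_nonneg_left h1 hC0
    linarith
  · intro x y hx hy
    have e : g x - g y = C • (f ⟨x, hx⟩ - f ⟨y, hy⟩) := by
      simp only [g, dif_pos hx, dif_pos hy, smul_sub]
    rw [e, norm_smul, Real.norm_eq_abs, abs_of_nonneg hC0]
    exact hC ⟨x, hx⟩ ⟨y, hy⟩

theorem no_finite_determinacy_for_trees (p : ℝ) (hp1 : 1 < p) (hp2 : p < 2) :
    ¬ ∃ μ : ℝ, 0 < μ ∧ ∀ h : ℕ, 1 ≤ h → ∀ lam : ℝ, 1 ≤ lam →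
      (∀ F : Set (TreeOmega h), F.Finite →
        cDist F (lp (fun _ : ℕ => ℝ) (ENNReal.ofReal p))
          (fun a b : F => tDist h a.1 b.1) (fun a b => ‖a - b‖) ≤ ENNReal.ofReal lam) →
      cDist (TreeOmega h) (lp (fun _ : ℕ => ℝ) (ENNReal.ofReal p)) (tDist h)
        (fun a b => ‖a - b‖) ≤ ENNReal.ofReal (μ * lam) := by
  rintro ⟨μ, hμ, H⟩
  have hp : (ENNReal.ofReal p).toReal = p := ENNReal.toReal_ofReal (by linarith)
  haveI : Fact (1 ≤ ENNReal.ofReal p) := ⟨by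
    rw [← ENNReal.ofReal_one]; exact ENNReal.ofReal_le_ofReal hp1.le⟩
  obtain ⟨c, hc, hlow⟩ := whole_lower (q := ENNReal.ofReal p) (by rw [hp]; exact hp1)
  rw [hp] at hlow
  have key : ∀ n : ℕ, c * n ≤ (μ * (48 * √(n + 2)) + 1) ^ p := by
    intro n
    apply hlow n _ (by positivity)
    apply H (2 ^ n) Nat.one_le_two_pow
    · have : (1 : ℝ) ≤ √(n + 2) := by
        rw [Real.one_le_sqrt]
        have : (0 : ℝ) ≤ n := by positivity
        linarith
      linarith
    · intro F hF
      exact finite_embed (by rw [hp]; exact hp1) (by rw [hp]; exact hp2) n F hF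
  set M : ℝ := 96 * μ + 1 with hM
  have hM0 : 0 < M := by positivity
  have key2 : ∀ n : ℕ, 1 ≤ n → (n : ℝ) ^ (1 - p / 2) ≤ M ^ p / c := by
    intro n hn
    have hn1 : (1 : ℝ) ≤ n := by exact_mod_cast hn
    have hn0 : (0 : ℝ) < n := by linarith
    have h1 : √((n : ℝ) + 2) ≤ 2 * √n := by
      rw [Real.sqrt_le_left (by positivity), mul_pow, Real.sq_sqrt hn0.le]
      linarith
    have h2 : 1 ≤ √(n : ℝ) := Real.one_le_sqrt.2 hn1
    have h3 : μ * (48 * √((n : ℝ) + 2)) + 1 ≤ M * √n := by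
      rw [hM]
      nlinarith
    have h4 := (key n).trans (Real.rpow_le_rpow (by positivity) h3 (by linarith))
    rw [Real.mul_rpow hM0.le (by positivity), Real.sqrt_eq_rpow, ← Real.rpow_mul hn0.le] at h4
    rw [le_div_iff₀ hc, show (1 : ℝ) - p / 2 = 1 - 1 / 2 * p by ring, Real.rpow_sub hn0,
      Real.rpow_one, div_mul_eq_mul_div, div_le_iff₀ (by positivity)]
    linarith
  have ht : Tendsto (fun n : ℕ => (n : ℝ) ^ (1 - p / 2)) atTop atTop :=
    (tendsto_rpow_atTop (by linarith)).comp tendsto_natCast_atTop_atTop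
  obtain ⟨n, hn1, hn2⟩ := ((ht.eventually_gt_atTop (M ^ p / c)).and (eventually_ge_atTop 1)).exists
  exact absurd (key2 n hn2) (not_le.2 hn1)

end
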